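/- Let G be a group with generating set X such that the Cayley graph Γ(G,X) is hyperbolic, and let H_1 and H_2 be subgroups each hyperbolically embedded in (G,X). Then there are only finitely many H_1-conjugacy classes of subgroups of the form H_1 ∩ gH_2g⁻¹ with g ∈ G (two such subgroups K, K′ being H_1-conjugate if K′ = hKh⁻¹ for some h ∈ H_1). -/

import Mathlib

open Pointwise

section BasicDefs

variable {G : Type*} [Group G]

/-- The word length of `g` with respect to the generating set `S`
(words use letters from `S ∪ S⁻¹`). -/
noncomputable def wordLength (S : Set G) (g : G) : ℕ :=
  sInf {n : ℕ | ∃ l : List G, l.length = n ∧ (∀ x ∈ l, x ∈ S ∨ x⁻¹ ∈ S) ∧ l.prod = g}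

/-- The word metric on `G` with respect to the generating set `S`. -/
noncomputable def wordDist (S : Set G) (g h : G) : ℝ :=
  (wordLength S (g⁻¹ * h) : ℝ)

/-- The closed `r`-neighborhood of a subset `A` with respect to the word metric `d_S`. -/
def nbhd (S : Set G) (r : ℝ) (A : Set G) : Set G :=
  {g : G | ∃ a ∈ A, wordDist S g a ≤ r}

/-- The distance between two subsets: the infimum of distances between their elements. -/
noncomputable def setDist (S : Set G) (A B : Set G) : ℝ :=
  sInf {r : ℝ | ∃ a ∈ A, ∃ b ∈ B, r = wordDist S a b}

/-- The conjugate subgroup `H^g = g H g⁻¹`. -/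
def conjSub (g : G) (H : Subgroup G) : Subgroup G :=
  H.map (MulAut.conj g).toMonoidHom

end BasicDefs

/-- `γ` restricted to `{0, …, n}` is a `(K, ε)`-quasigeodesic for the distance function `d`. -/
def IsQuasigeodesic {α : Type*} (d : α → α → ℝ) (K ε : ℝ) (n : ℕ) (γ : ℕ → α) : Prop :=
  ∀ i j : ℕ, i ≤ n → j ≤ n →
    (1 / K) * |(i : ℝ) - (j : ℝ)| - ε ≤ d (γ i) (γ j) ∧
      d (γ i) (γ j) ≤ K * |(i : ℝ) - (j : ℝ)| + ε

/-- `γ` restricted to `{0, …, n}` is a geodesic for the distance function `d`. -/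
def IsGeodesic {α : Type*} (d : α → α → ℝ) (n : ℕ) (γ : ℕ → α) : Prop :=
  ∀ i j : ℕ, i ≤ n → j ≤ n → d (γ i) (γ j) = |(i : ℝ) - (j : ℝ)|

/-- The path `γ` (on `{0, …, n}`) is `f`-stable: every `(K, ε)`-quasigeodesic with endpoints
on `γ` stays in the `f K ε`-neighborhood of `γ`. -/
def IsStablePath {α : Type*} (d : α → α → ℝ) (f : ℝ → ℝ → ℝ) (n : ℕ) (γ : ℕ → α) : Prop :=
  ∀ K ε : ℝ, 1 ≤ K → 0 ≤ ε → ∀ (m : ℕ) (η : ℕ → α),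
    IsQuasigeodesic d K ε m η →
    (∃ i ≤ n, η 0 = γ i) → (∃ i ≤ n, η m = γ i) →
    ∀ j ≤ m, ∃ i ≤ n, d (η j) (γ i) ≤ f K ε

/-- The Gromov product `⟨x, y⟩_w` with respect to a distance function `d`. -/
noncomputable def gromovProd {α : Type*} (d : α → α → ℝ) (w x y : α) : ℝ :=
  (d w x + d w y - d x y) / 2

/-- Gromov hyperbolicity of a distance function, via the four-point condition. -/
def IsHyperbolicDist {α : Type*} (d : α → α → ℝ) : Prop :=
  ∃ δ : ℝ, 0 ≤ δ ∧ ∀ w x y z : α,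
    min (gromovProd d w x y) (gromovProd d w y z) - δ ≤ gromovProd d w x z

section GroupDefs

variable {G : Type*} [Group G]

/-- `H` is a stable subgroup of `(G, d_S)` with stability function `f`: `H` has a finite
generating set `T` such that the inclusion `(H, d_T) → (G, d_S)` is a quasi-isometric
embedding sending every `d_T`-geodesic to an `f`-stable quasigeodesic of `(G, d_S)`. -/
def IsStableSubgroupWith (S : Set G) (H : Subgroup G) (f : ℝ → ℝ → ℝ) : Prop :=
  ∃ T : Set H, T.Finite ∧ Subgroup.closure T = ⊤ ∧
    (∃ μ c : ℝ, 1 ≤ μ ∧ 0 ≤ c ∧ ∀ h₁ h₂ : H,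
      (1 / μ) * wordDist T h₁ h₂ - c ≤ wordDist S (h₁ : G) (h₂ : G) ∧
        wordDist S (h₁ : G) (h₂ : G) ≤ μ * wordDist T h₁ h₂ + c) ∧
    ∀ (n : ℕ) (γ : ℕ → H), IsGeodesic (wordDist T) n γ →
      (∃ K ε : ℝ, 1 ≤ K ∧ 0 ≤ ε ∧
        IsQuasigeodesic (wordDist S) K ε n (fun i => (γ i : G))) ∧
      IsStablePath (wordDist S) f n (fun i => (γ i : G))

/-- `H` is a stable subgroup of `(G, d_S)`. -/
def IsStableSubgroup (S : Set G) (H : Subgroup G) : Prop :=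
  ∃ f : ℝ → ℝ → ℝ, IsStableSubgroupWith S H f

/-- The family `Q` of subgroups is hyperbolically embedded in `(G, X)`:
(Q1) geometric separation, (Q2) finite generation, (Q3) uniform quasi-isometric embedding. -/
def IsHypEmbFamily {G : Type*} [Group G] {ι : Type*} (X : Set G) (Q : ι → Subgroup G) : Prop :=
  (∀ ε : ℝ, 0 < ε → ∃ R : ℝ, ∀ (g : G) (i j : ι),
      (∃ a ∈ (Q i : Set G) ∩ nbhd X ε (g • (Q j : Set G)),
        ∃ b ∈ (Q i : Set G) ∩ nbhd X ε (g • (Q j : Set G)), R ≤ wordDist X a b) →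
      i = j ∧ g ∈ Q i) ∧
  ∃ Y : ι → Set G, (∀ i, (Y i).Finite ∧ Y i ⊆ (Q i : Set G) ∧ Subgroup.closure (Y i) = Q i) ∧
    ∃ μ c : ℝ, 1 ≤ μ ∧ 0 ≤ c ∧ ∀ i : ι, ∀ h ∈ Q i,
      (wordLength (Y i) h : ℝ) ≤ μ * (wordLength X h : ℝ) + c

/-- The subset `H` of `G` satisfies the WPD condition in `(G, X)`. -/
def WPDSet (X : Set G) (H : Set G) : Prop :=
  ∀ ε : ℝ, 0 < ε → ∃ N : ℝ, 0 < N ∧ ∀ h₁ h₂ : G, h₁ ∈ H → h₂ ∈ H →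
    N < wordDist X h₁ h₂ →
    {g : G | wordDist X h₁ (g * h₁) < ε ∧ wordDist X h₂ (g * h₂) < ε}.Finite

/-- A quasimorphism on `G`. -/
def IsQuasimorphism (q : G → ℝ) : Prop :=
  ∃ D : ℝ, 0 ≤ D ∧ ∀ x y : G, |q (x * y) - q x - q y| ≤ D

/-- A homogeneous quasimorphism on `G`. -/
def IsHomogeneousQM (q : G → ℝ) : Prop :=
  IsQuasimorphism q ∧ ∀ (x : G) (n : ℕ), q (x ^ n) = (n : ℝ) * q x

/-- `H` is a quasiconvex subgroup of `(G, d_S)`: every geodesic with endpoints in `H`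
lies in a uniformly bounded neighborhood of `H`. -/
def IsQuasiconvex (S : Set G) (H : Subgroup G) : Prop :=
  ∃ C : ℝ, 0 ≤ C ∧ ∀ (n : ℕ) (γ : ℕ → G), IsGeodesic (wordDist S) n γ →
    γ 0 ∈ H → γ n ∈ H → ∀ i ≤ n, ∃ h ∈ H, wordDist S (γ i) h ≤ C

end GroupDefs

/-!
In a hyperbolic space, a set whose points are joined by chains of linearly bounded length is
quasiconvex: at the point of a geodesic farthest from the set, at distance `D`, a chain of at most
`2 ^ m` steps has Gromov product at least `D - O(m)`, while a chain with `O(D)` steps closes up a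
detour around a geodesic, where the Gromov product vanishes; hence `D = O(log D)`.

For the theorem, replace `g` by a shortest element of the double coset `H₁ g H₂` and let `k` be a
long element of `H₁ ∩ g H₂ g⁻¹`. In the quadrilateral `1, g, k g, k` the sides `[1, g]` and
`[k, k g]` are shortest between `H₁` and `g H₂`, so the middle part of `[1, k]` stays close to both
`H₁` and `g H₂`. After translation by an element of `H₁`, the coset `g H₂` passes close to `1` and
to some `b ∈ H₁` of prescribed length. By geometric separation `b` determines the coset, and there
are finitely many such `b`. If there is no long `k`, the intersection lies in a finite ball of `H₁`.
-/

section HyperbolicMetric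

open Filter Metric

/-- The four-point condition with constant `δ`, so that `IsHyperbolicDist d` asserts
`IsHyperbolicWith d δ` for some `δ ≥ 0`. -/
def IsHyperbolicWith {α : Type*} (d : α → α → ℝ) (δ : ℝ) : Prop :=
  ∀ w x y z : α, min (gromovProd d w x y) (gromovProd d w y z) - δ ≤ gromovProd d w x z

/-- Linear chain connectedness of `A`: points `a, b ∈ A` are joined by a chain in `A` with jumps of
size at most `M` and about `μ * d a b + c` steps. Chains are infinite sequences that become constant
after that many steps, so that one of length `2 ^ m` is at hand. -/
def IsLinearlyChained {α : Type*} (d : α → α → ℝ) (M μ c : ℝ) (A : Set α) : Prop :=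
  ∀ a ∈ A, ∀ b ∈ A, ∃ x : ℕ → α, (∀ i, x i ∈ A) ∧ (∀ i, d (x i) (x (i + 1)) ≤ M) ∧ x 0 = a ∧
    ∀ i : ℕ, μ * d a b + c ≤ i → x i = b

/-- Quasiconvexity of `A` in terms of Gromov products instead of geodesics: a point `w` is within
`2 * ⟨a, b⟩_w + C` of `A` for all `a, b ∈ A`. -/
def IsGromovQuasiconvex {α : Type*} (d : α → α → ℝ) (C : ℝ) (A : Set α) : Prop :=
  ∀ a ∈ A, ∀ b ∈ A, ∀ w, ∃ x ∈ A, d w x ≤ 2 * gromovProd d w a b + C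

lemma IsHyperbolicWith.sub_mul_le_gromovProd_of_chain {α : Type*} {d : α → α → ℝ} {δ r : ℝ} {w : α}
    {x : ℕ → α} (hδ : IsHyperbolicWith d δ) (hx : ∀ i, r ≤ gromovProd d w (x i) (x (i + 1)))
    (m i : ℕ) : r - m * δ ≤ gromovProd d w (x i) (x (i + 2 ^ m)) := by
  induction m generalizing i with
  | zero => simpa using hx i
  | succ m ih =>
    have hhalves := le_min (ih i) (ih (i + 2 ^ m))
    have hfour := hδ w (x i) (x (i + 2 ^ m)) (x (i + 2 ^ m + 2 ^ m))
    rw [show i + 2 ^ (m + 1) = i + 2 ^ m + 2 ^ m by ring]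
    push_cast
    linarith

lemma IsGeodesic.comp_add {α : Type*} {d : α → α → ℝ} {n i : ℕ} {γ : ℕ → α}
    (hγ : IsGeodesic d n γ) (hi : i ≤ n) : IsGeodesic d (n - i) (fun j => γ (i + j)) := by
  intro j k hj hk
  rw [hγ (i + j) (i + k) (by omega) (by omega)]
  push_cast
  congr 1
  ring

lemma IsGeodesic.comp_sub {α : Type*} {d : α → α → ℝ} {n i : ℕ} {γ : ℕ → α}
    (hγ : IsGeodesic d n γ) (hi : i ≤ n) : IsGeodesic d i (fun j => γ (i - j)) := by
  intro j k hj hk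
  rw [hγ (i - j) (i - k) (by omega) (by omega), Nat.cast_sub hj, Nat.cast_sub hk, abs_sub_comm]
  congr 1
  ring

lemma IsGeodesic.eq_sub {α : Type*} {d : α → α → ℝ} {n i j : ℕ} {γ : ℕ → α}
    (hγ : IsGeodesic d n γ) (hij : i ≤ j) (hj : j ≤ n) : d (γ i) (γ j) = j - i := by
  have hcast : (i : ℝ) ≤ j := by exact_mod_cast hij
  rw [hγ i j (hij.trans hj) hj, abs_sub_comm, abs_of_nonneg (sub_nonneg.2 hcast)]

lemma eventually_exists_two_pow {μ δ : ℝ} (hμ : 0 ≤ μ) (hδ : 0 ≤ δ) (A c : ℝ) :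
    ∀ᶠ D : ℝ in atTop, ∃ m : ℕ, μ * D + c ≤ 2 ^ m ∧ A + δ * m < D := by
  have hpow (k : ℕ) : (fun m : ℕ => (m : ℝ) ^ k) =o[atTop] fun m => (2 : ℝ) ^ m :=
    isLittleO_pow_const_const_pow_of_one_lt k one_lt_two
  have hexp : ∀ᶠ m : ℕ in atTop, μ * (δ + 1) * m + (μ * (A + δ + 1) + c) ≤ 2 ^ m := by
    filter_upwards [(((hpow 1).const_mul_left (μ * (δ + 1))).add
      ((hpow 0).const_mul_left (μ * (A + δ + 1) + c))).bound one_pos] with m hm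
    simpa using (le_abs_self _).trans hm
  have hfloor : Tendsto (fun D : ℝ => ⌊(D - A) / (δ + 1)⌋₊) atTop atTop :=
    tendsto_nat_floor_atTop.comp
      ((tendsto_atTop_add_const_right _ (-A) tendsto_id).atTop_div_const (by positivity))
  filter_upwards [hfloor.eventually hexp, hfloor.eventually_gt_atTop 0] with D hD hpos
  set m := ⌊(D - A) / (δ + 1)⌋₊
  have hle : m * (δ + 1) ≤ D - A :=
    (le_div_iff₀ (by positivity)).1 (Nat.floor_le (Nat.pos_of_floor_pos hpos).le)
  have hlt : D - A < (m + 1) * (δ + 1) :=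
    (div_lt_iff₀ (by positivity)).1 (Nat.lt_floor_add_one _)
  have hm : (0 : ℝ) < m := by exact_mod_cast hpos
  have hμD : μ * D ≤ μ * (A + (m + 1) * (δ + 1)) := by gcongr; linarith
  exact ⟨m, by linarith, by linarith⟩

variable {α : Type*} [PseudoMetricSpace α]

lemma isGeodesic_of_dist_succ_le_one {γ : ℕ → α} {n : ℕ} (hstep : ∀ i, dist (γ i) (γ (i + 1)) ≤ 1)
    (hn : dist (γ 0) (γ n) = n) : IsGeodesic dist n γ := by
  have hle {i j : ℕ} (hij : i ≤ j) : dist (γ i) (γ j) ≤ j - i := by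
    simpa [hij] using dist_le_Ico_sum_of_dist_le (f := γ) hij (d := fun _ => 1) fun _ _ => hstep _
  have heq {i j : ℕ} (hij : i ≤ j) (hj : j ≤ n) : dist (γ i) (γ j) = j - i := by
    refine (hle hij).antisymm ?_
    have hstart := hle (Nat.zero_le i)
    have hend := hle hj
    have htriangle := dist_triangle4 (γ 0) (γ i) (γ j) (γ n)
    push_cast at hstart
    linarith
  intro i j hi hj
  rcases le_total i j with hij | hji
  · rw [heq hij hj, abs_sub_comm, abs_of_nonneg (sub_nonneg.2 (by exact_mod_cast hij))]
  · rw [dist_comm, heq hji hi, abs_of_nonneg (sub_nonneg.2 (by exact_mod_cast hji))]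

lemma IsGeodesic.gromovProd_eq_zero {γ : ℕ → α} {n i j k : ℕ} (hγ : IsGeodesic dist n γ)
    (hij : i ≤ j) (hjk : j ≤ k) (hk : k ≤ n) : gromovProd dist (γ j) (γ i) (γ k) = 0 := by
  rw [gromovProd, dist_comm (γ j) (γ i), hγ.eq_sub hij (hjk.trans hk), hγ.eq_sub hjk hk,
    hγ.eq_sub (hij.trans hjk) hk]
  ring

lemma sub_half_le_gromovProd {w x y : α} {D M : ℝ} (hx : D ≤ dist w x) (hy : D ≤ dist w y)
    (hxy : dist x y ≤ M) : D - M / 2 ≤ gromovProd dist w x y := by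
  rw [gromovProd]
  linarith

lemma gromovProd_comm (w x y : α) : gromovProd dist w x y = gromovProd dist w y x := by
  rw [gromovProd, gromovProd, dist_comm x y]
  ring

lemma IsHyperbolicWith.nonneg {δ : ℝ} (hδ : IsHyperbolicWith (dist : α → α → ℝ) δ) (w : α) :
    0 ≤ δ := by
  simpa [gromovProd] using hδ w w w w

lemma IsHyperbolicWith.sub_le_gromovProd_of_three {δ r : ℝ}
    (hδ : IsHyperbolicWith (dist : α → α → ℝ) δ) {w x y z t : α} (hxy : r ≤ gromovProd dist w x y)
    (hyz : r ≤ gromovProd dist w y z) (hzt : r ≤ gromovProd dist w z t) :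
    r - 2 * δ ≤ gromovProd dist w x t := by
  have hxz := hδ w x y z
  have hxt := hδ w x z t
  have hr := le_min hxy hyz
  have hr' : r - δ ≤ min (gromovProd dist w x z) (gromovProd dist w z t) :=
    le_min (by linarith) (by linarith [hδ.nonneg w])
  linarith

lemma exists_isGeodesic_shadow {A : Set α} {η : ℕ → α} {m : ℕ} (hη : IsGeodesic dist m η)
    (hm : η m ∈ A) (hfar : ∀ j ≤ m, infDist (η j) A ≤ infDist (η 0) A) :
    ∃ j ≤ m, ∃ a ∈ A, dist (η j) a ≤ infDist (η 0) A + 1 ∧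
      dist (η 0) (η j) ≤ 2 * infDist (η 0) A + 2 ∧
      infDist (η 0) A ≤ gromovProd dist (η 0) (η j) a := by
  set D := infDist (η 0) A
  have hD : 0 ≤ D := infDist_nonneg
  set k := ⌈2 * D + 1⌉₊
  have hk_ge : 2 * D + 1 ≤ k := Nat.le_ceil _
  have hk_lt : (k : ℝ) < 2 * D + 1 + 1 := Nat.ceil_lt_add_one (by positivity)
  rcases le_total k m with hkm | hmk
  · obtain ⟨a, ha, hka⟩ := (infDist_lt_iff ⟨_, hm⟩).1 ((hfar k hkm).trans_lt (lt_add_one D))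
    have hdist : dist (η 0) (η k) = k := by simpa using hη.eq_sub (Nat.zero_le k) hkm
    have hDa : D ≤ dist (η 0) a := infDist_le_dist_of_mem ha
    refine ⟨k, hkm, a, ha, hka.le, by linarith, ?_⟩
    rw [gromovProd]
    linarith
  · have hdist : dist (η 0) (η m) = m := by simpa using hη.eq_sub (Nat.zero_le m) le_rfl
    have hmk' : (m : ℝ) ≤ k := by exact_mod_cast hmk
    have hDm : D ≤ dist (η 0) (η m) := infDist_le_dist_of_mem hm
    refine ⟨m, le_rfl, η m, hm, by rw [dist_self]; linarith, by linarith, ?_⟩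
    simpa using sub_half_le_gromovProd hDm hDm (dist_self _).le

lemma IsHyperbolicWith.infDist_le_of_farthest {δ M μ c : ℝ}
    (hδ : IsHyperbolicWith (dist : α → α → ℝ) δ) {A : Set α} (hμ : 0 ≤ μ)
    (hA : IsLinearlyChained dist M μ c A)
    {γ : ℕ → α} {n i : ℕ} (hγ : IsGeodesic dist n γ) (h0 : γ 0 ∈ A) (hn : γ n ∈ A) (hi : i ≤ n)
    (hfar : ∀ j ≤ n, infDist (γ j) A ≤ infDist (γ i) A) {m : ℕ}
    (hm : μ * (6 * infDist (γ i) A + 6) + c ≤ 2 ^ m) :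
    infDist (γ i) A ≤ M / 2 + 2 * δ + δ * m := by
  obtain ⟨j, hj, a, ha, hja, hdj, hprod_a⟩ := exists_isGeodesic_shadow (hγ.comp_sub hi)
    (by simpa using h0) fun j _ => by simpa using hfar (i - j) (by omega)
  obtain ⟨k, hk, b, hb, hkb, hdk, hprod_b⟩ := exists_isGeodesic_shadow (hγ.comp_add hi)
    (by simpa [hi] using hn) fun k _ => by simpa using hfar (i + k) (by omega)
  simp only [Nat.sub_zero, Nat.add_zero] at hja hdj hprod_a hkb hdk hprod_b
  have hzero : gromovProd dist (γ i) (γ (i - j)) (γ (i + k)) = 0 :=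
    hγ.gromovProd_eq_zero (by omega) (by omega) (by omega)
  have hab : dist a b ≤ 6 * infDist (γ i) A + 6 := by
    have htriangle_a := dist_triangle (γ i) (γ (i - j)) a
    have htriangle_b := dist_triangle (γ i) (γ (i + k)) b
    have htriangle := dist_triangle_left a b (γ i)
    linarith
  obtain ⟨x, hxA, hstep, hx0, hxb⟩ := hA a ha b hb
  have hxm : x (2 ^ m) = b := hxb _ (by
    push_cast
    exact le_trans (by gcongr) hm)
  have hprod_ab : infDist (γ i) A - M / 2 - m * δ ≤ gromovProd dist (γ i) a b := by
    simpa only [hx0, zero_add, hxm] using hδ.sub_mul_le_gromovProd_of_chain (fun l =>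
      sub_half_le_gromovProd (infDist_le_dist_of_mem (hxA l)) (infDist_le_dist_of_mem (hxA (l + 1)))
        (hstep l)) m 0
  have hmδ : 0 ≤ m * δ := mul_nonneg m.cast_nonneg (hδ.nonneg (γ i))
  have hM : 0 ≤ M := dist_nonneg.trans (hstep 0)
  have hthree := hδ.sub_le_gromovProd_of_three (r := infDist (γ i) A - M / 2 - m * δ)
    (le_trans (by linarith) hprod_a) hprod_ab
    ((gromovProd_comm (γ i) b (γ (i + k))).symm ▸ le_trans (by linarith) hprod_b)
  linarith

theorem IsHyperbolicWith.exists_quasiconvex_of_isLinearlyChained {δ : ℝ}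
    (hδ : IsHyperbolicWith (dist : α → α → ℝ) δ) {A : Set α} {M μ c : ℝ} (hμ : 0 ≤ μ)
    (hA : IsLinearlyChained dist M μ c A) :
    ∃ C : ℝ, 0 ≤ C ∧ ∀ (n : ℕ) (γ : ℕ → α), IsGeodesic dist n γ → γ 0 ∈ A → γ n ∈ A →
      ∀ i ≤ n, ∃ a ∈ A, dist (γ i) a ≤ C := by
  rcases isEmpty_or_nonempty α with _ | ⟨⟨p⟩⟩
  · exact ⟨0, le_rfl, fun _ γ => isEmptyElim (γ 0)⟩
  obtain ⟨C, hC⟩ := eventually_atTop.1 <| eventually_exists_two_pow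
    (mul_nonneg hμ (by norm_num : (0 : ℝ) ≤ 6)) (hδ.nonneg p) (M / 2 + 2 * δ) (μ * 6 + c)
  refine ⟨|C| + 1, by positivity, fun n γ hγ h0 hn i hi => ?_⟩
  obtain ⟨j, hj, hfar⟩ := Finset.exists_max_image (Finset.range (n + 1))
    (fun j => infDist (γ j) A) ⟨0, by simp⟩
  simp only [Finset.mem_range_succ_iff] at hj hfar
  have hjC : infDist (γ j) A < C := by
    by_contra! hCj
    obtain ⟨m, hm, hlt⟩ := hC _ hCj
    exact hlt.not_ge
      (hδ.infDist_le_of_farthest hμ hA hγ h0 hn hj hfar ((by ring : _ = _).trans_le hm))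
  obtain ⟨a, ha, hia⟩ := (infDist_lt_iff ⟨_, h0⟩).1 ((hfar i hi).trans_lt hjC)
  exact ⟨a, ha, by linarith [le_abs_self C]⟩

lemma IsHyperbolicWith.exists_dist_geodesic_le {δ : ℝ}
    (hδ : IsHyperbolicWith (dist : α → α → ℝ) δ) {γ : ℕ → α} {n : ℕ} (hγ : IsGeodesic dist n γ)
    (w : α) : ∃ i ≤ n, dist w (γ i) ≤ 2 * gromovProd dist w (γ 0) (γ n) + 2 * δ + 1 := by
  set i := min ⌊dist w (γ 0)⌋₊ n
  have hin : i ≤ n := min_le_right _ _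
  have hfloor_le : (⌊dist w (γ 0)⌋₊ : ℝ) ≤ dist w (γ 0) := Nat.floor_le dist_nonneg
  have hi_le : (i : ℝ) ≤ dist w (γ 0) := le_trans (by exact_mod_cast min_le_left _ _) hfloor_le
  have hi_ge : n - dist w (γ n) - 1 ≤ i := by
    have htriangle := dist_triangle_left (γ 0) (γ n) w
    have hlen := hγ.eq_sub (Nat.zero_le n) le_rfl
    have hlt := Nat.lt_floor_add_one (dist w (γ 0))
    rcases min_choice ⌊dist w (γ 0)⌋₊ n with hi | hi
    · rw [show i = ⌊dist w (γ 0)⌋₊ from hi]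
      push_cast at hlen
      linarith
    · rw [show i = n from hi]
      linarith [dist_nonneg (x := w) (y := γ n)]
  refine ⟨i, hin, ?_⟩
  have hstart := hγ.eq_sub (Nat.zero_le i) hin
  have hend := hγ.eq_sub hin le_rfl
  have hfour := hδ w (γ 0) (γ i) (γ n)
  push_cast at hstart
  simp only [gromovProd] at hfour ⊢
  rcases min_cases ((dist w (γ 0) + dist w (γ i) - dist (γ 0) (γ i)) / 2)
    ((dist w (γ i) + dist w (γ n) - dist (γ i) (γ n)) / 2) with ⟨hmin, -⟩ | ⟨hmin, -⟩ <;>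
  · rw [hmin] at hfour
    linarith

lemma IsHyperbolicWith.near_of_isGromovQuasiconvex {δ C₁ C₂ : ℝ}
    (hδ : IsHyperbolicWith (dist : α → α → ℝ) δ) {A B : Set α}
    (hA : IsGromovQuasiconvex dist C₁ A) (hB : IsGromovQuasiconvex dist C₂ B)
    {a a' b b' : α} (ha : a ∈ A) (ha' : a' ∈ A) (hb : b ∈ B) (hb' : b' ∈ B)
    (hab : ∀ x ∈ A, ∀ y ∈ B, dist a b ≤ dist x y) (hab' : ∀ x ∈ A, ∀ y ∈ B, dist a' b' ≤ dist x y)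
    {w : α} (hw : gromovProd dist w a a' = 0) (hwa : C₁ + 4 * δ < dist w a)
    (hwa' : C₁ + 4 * δ < dist w a') :
    ∃ x ∈ A, dist w x ≤ C₁ ∧ ∃ y ∈ B, dist x y ≤ C₁ + C₂ + 4 * δ := by
  obtain ⟨x, hx, hwx⟩ := hA a ha a' ha' w
  replace hwx : dist w x ≤ C₁ := by simpa [hw] using hwx
  have side {p q : α} (hq : q ∈ B) (hpq : ∀ x ∈ A, ∀ y ∈ B, dist p q ≤ dist x y)
      (hwp : C₁ + 4 * δ < dist w p) : 2 * δ < gromovProd dist w p q := by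
    have hmin := hpq x hx q hq
    have htriangle := dist_triangle_left x q w
    rw [gromovProd]
    linarith
  have hbb' : gromovProd dist w b b' ≤ 2 * δ := by
    by_contra! hlt
    set r := min (min (gromovProd dist w a b) (gromovProd dist w b b')) (gromovProd dist w a' b')
    have hr_gt : 2 * δ < r := lt_min (lt_min (side hb hab hwa) hlt) (side hb' hab' hwa')
    have hthree : r - 2 * δ ≤ gromovProd dist w a a' := hδ.sub_le_gromovProd_of_three
      (y := b) (z := b') ((min_le_left _ _).trans (min_le_left _ _))
      ((min_le_left _ _).trans (min_le_right _ _))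
      ((min_le_right _ _).trans (gromovProd_comm w a' b').le)
    linarith
  obtain ⟨y, hy, hwy⟩ := hB b hb b' hb' w
  exact ⟨x, hx, hwx, y, hy, by linarith [dist_triangle_left x y w]⟩

lemma IsHyperbolicWith.exists_near_pair {δ C₁ C₂ : ℝ}
    (hδ : IsHyperbolicWith (dist : α → α → ℝ) δ) {A B : Set α}
    (hA : IsGromovQuasiconvex dist C₁ A) (hB : IsGromovQuasiconvex dist C₂ B)
    {γ : ℕ → α} {n L s : ℕ} (hγ : IsGeodesic dist n γ) (h0 : γ 0 ∈ A) (hn : γ n ∈ A)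
    {b b' : α} (hb : b ∈ B) (hb' : b' ∈ B) (hab : ∀ x ∈ A, ∀ y ∈ B, dist (γ 0) b ≤ dist x y)
    (hab' : ∀ x ∈ A, ∀ y ∈ B, dist (γ n) b' ≤ dist x y) (hL : C₁ + 4 * δ < L)
    (hlong : 2 * L + s ≤ n) :
    ∃ x ∈ A, ∃ x' ∈ A, |dist x x' - s| ≤ 2 * C₁ ∧ (∃ y ∈ B, dist x y ≤ C₁ + C₂ + 4 * δ) ∧
      ∃ y ∈ B, dist x' y ≤ C₁ + C₂ + 4 * δ := by
  have near {i : ℕ} (hi : L ≤ i) (hin : i + L ≤ n) :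
      ∃ x ∈ A, dist (γ i) x ≤ C₁ ∧ ∃ y ∈ B, dist x y ≤ C₁ + C₂ + 4 * δ := by
    have hi' : (L : ℝ) ≤ i := by exact_mod_cast hi
    have hin' : (i : ℝ) + L ≤ n := by exact_mod_cast hin
    have hstart := hγ.eq_sub (Nat.zero_le i) (by omega)
    have hend := hγ.eq_sub (by omega : i ≤ n) le_rfl
    push_cast at hstart
    exact hδ.near_of_isGromovQuasiconvex hA hB h0 hn hb hb' hab hab'
      (hγ.gromovProd_eq_zero (Nat.zero_le i) (by omega) le_rfl)
      (by rw [dist_comm]; linarith) (by linarith)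
  obtain ⟨x, hx, hxγ, hxB⟩ := near (i := L) le_rfl (by omega)
  obtain ⟨x', hx', hxγ', hxB'⟩ := near (i := L + s) (by omega) (by omega)
  have hmid : dist (γ L) (γ (L + s)) = s := by
    rw [hγ.eq_sub (by omega) (by omega)]
    push_cast
    ring
  refine ⟨x, hx, x', hx', abs_le.2 ⟨?_, ?_⟩, hxB, hxB'⟩
  · linarith [dist_triangle4_right (γ L) (γ (L + s)) x x']
  · linarith [dist_triangle4_left (γ L) (γ (L + s)) x x']

end HyperbolicMetric

section WordMetric

variable {G : Type*} [Group G]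

lemma wordLength_prod_le {S : Set G} {l : List G} (hl : ∀ x ∈ l, x ∈ S ∨ x⁻¹ ∈ S) :
    wordLength S l.prod ≤ l.length :=
  Nat.sInf_le ⟨l, rfl, hl, rfl⟩

lemma exists_list_length_eq_wordLength {S : Set G} {g : G} (hg : g ∈ Subgroup.closure S) :
    ∃ l : List G, l.length = wordLength S g ∧ (∀ x ∈ l, x ∈ S ∨ x⁻¹ ∈ S) ∧ l.prod = g := by
  rw [← Subgroup.mem_toSubmonoid, Subgroup.closure_toSubmonoid] at hg
  obtain ⟨l, hl, hprod⟩ := Submonoid.exists_list_of_mem_closure hg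
  exact Nat.sInf_mem (s := {n | ∃ l : List G, l.length = n ∧ (∀ x ∈ l, x ∈ S ∨ x⁻¹ ∈ S) ∧
    l.prod = g}) ⟨l.length, l, rfl, hl, hprod⟩

lemma wordLength_one (S : Set G) : wordLength S 1 = 0 :=
  Nat.le_zero.1 (wordLength_prod_le (S := S) (l := []) (by simp))

lemma wordLength_inv (S : Set G) (g : G) : wordLength S g⁻¹ = wordLength S g := by
  have reverse {g : G} {n : ℕ}
      (h : ∃ l : List G, l.length = n ∧ (∀ x ∈ l, x ∈ S ∨ x⁻¹ ∈ S) ∧ l.prod = g) :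
      ∃ l : List G, l.length = n ∧ (∀ x ∈ l, x ∈ S ∨ x⁻¹ ∈ S) ∧ l.prod = g⁻¹ := by
    obtain ⟨l, hlen, hl, hprod⟩ := h
    refine ⟨(l.map fun x => x⁻¹).reverse, by simpa using hlen, fun x hx => ?_,
      by rw [← List.prod_inv_reverse, hprod]⟩
    simpa [or_comm] using hl x⁻¹ (by simpa using hx)
  exact congrArg sInf (Set.ext fun n => ⟨fun h => by simpa using reverse h, reverse⟩)

lemma wordLength_of_mem {S : Set G} {x : G} (hx : x ∈ S ∨ x⁻¹ ∈ S) : wordLength S x ≤ 1 := by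
  simpa using wordLength_prod_le (l := [x]) (by simpa using hx)

lemma wordLength_mul_le {S : Set G} {g h : G} (hg : g ∈ Subgroup.closure S)
    (hh : h ∈ Subgroup.closure S) : wordLength S (g * h) ≤ wordLength S g + wordLength S h := by
  obtain ⟨l, hlen, hl, rfl⟩ := exists_list_length_eq_wordLength hg
  obtain ⟨l', hlen', hl', rfl⟩ := exists_list_length_eq_wordLength hh
  rw [← List.prod_append, ← hlen, ← hlen', ← List.length_append]
  exact wordLength_prod_le fun x hx => (List.mem_append.1 hx).elim (hl x) (hl' x)

lemma finite_wordLength_le {S : Set G} (hS : S.Finite) (n : ℕ) :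
    {g | g ∈ Subgroup.closure S ∧ wordLength S g ≤ n}.Finite := by
  have : Finite ↥(S ∪ S⁻¹) := (hS.union hS.inv).to_subtype
  refine ((List.finite_length_le ↥(S ∪ S⁻¹) n).image fun l => (l.map (↑)).prod).subset ?_
  rintro g ⟨hg, hgn⟩
  obtain ⟨l, hlen, hl, hprod⟩ := exists_list_length_eq_wordLength hg
  lift l to List ↥(S ∪ S⁻¹) using hl
  exact ⟨l, by simpa [← hlen] using hgn, hprod⟩

lemma wordDist_one_left (S : Set G) (g : G) : wordDist S 1 g = wordLength S g := by
  simp [wordDist]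

lemma wordDist_mul_left (S : Set G) (g a b : G) : wordDist S (g * a) (g * b) = wordDist S a b := by
  simp [wordDist, mul_assoc]

lemma gromovProd_wordDist_mul_left (S : Set G) (g w a b : G) :
    gromovProd (wordDist S) (g * w) (g * a) (g * b) = gromovProd (wordDist S) w a b := by
  simp only [gromovProd, wordDist_mul_left]

lemma nbhd_mono {S A : Set G} {r r' : ℝ} (h : r ≤ r') : nbhd S r A ⊆ nbhd S r' A :=
  fun _ ⟨a, ha, hr⟩ => ⟨a, ha, hr.trans h⟩

lemma mul_mem_nbhd_smul {S A : Set G} {r : ℝ} {g a : G} (ha : a ∈ nbhd S r A) :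
    g * a ∈ nbhd S r (g • A) := by
  obtain ⟨x, hx, hax⟩ := ha
  exact ⟨g * x, Set.smul_mem_smul_set hx, by rwa [wordDist_mul_left]⟩

/-- The word metric as a pseudometric structure on `G`, so that the results on hyperbolic
pseudometric spaces apply to `wordDist X`. -/
@[reducible] noncomputable def wordPseudoMetricSpace (X : Set G) (hX : Subgroup.closure X = ⊤) :
    PseudoMetricSpace G where
  dist := wordDist X
  dist_self a := by simp [wordDist, wordLength_one]
  dist_comm a b := by rw [wordDist, ← wordLength_inv]; simp [wordDist]
  dist_triangle a b c := by
    have hmul := wordLength_mul_le (S := X) (g := a⁻¹ * b) (h := b⁻¹ * c) (by simp [hX])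
      (by simp [hX])
    simp only [mul_assoc, mul_inv_cancel_left] at hmul
    simpa only [wordDist] using mod_cast hmul

lemma wordDist_take_prod_succ_le {X : Set G} {l : List G} {M : ℕ}
    (hl : ∀ x ∈ l, wordLength X x ≤ M) (a : G) (i : ℕ) :
    wordDist X (a * (l.take i).prod) (a * (l.take (i + 1)).prod) ≤ M := by
  rw [wordDist_mul_left]
  rcases lt_or_ge i l.length with hi | hi
  · rw [l.prod_take_succ i hi]
    simpa [wordDist] using hl _ (l.getElem_mem hi)
  · simp [wordDist, wordLength_one, List.take_of_length_le, hi, hi.trans (Nat.le_succ i)]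

lemma exists_isGeodesic {X : Set G} (hX : Subgroup.closure X = ⊤) (a b : G) :
    ∃ γ : ℕ → G, γ 0 = a ∧ γ (wordLength X (a⁻¹ * b)) = b ∧
      IsGeodesic (wordDist X) (wordLength X (a⁻¹ * b)) γ := by
  let := wordPseudoMetricSpace X hX
  obtain ⟨l, hlen, hl, hprod⟩ :=
    exists_list_length_eq_wordLength (S := X) (g := a⁻¹ * b) (by simp [hX])
  refine ⟨fun i => a * (l.take i).prod, by simp, by simp [← hlen, hprod], ?_⟩
  refine isGeodesic_of_dist_succ_le_one (fun i => ?_) ?_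
  · exact (wordDist_take_prod_succ_le (fun x hx => wordLength_of_mem (hl x hx)) a i).trans_eq
      Nat.cast_one
  · change wordDist X _ _ = _
    simp [← hlen, hprod, wordDist]

end WordMetric

section Subgroups

variable {G : Type*} [Group G] {X : Set G} {H : Subgroup G}

/-- `H` is finitely generated and undistorted in `(G, X)`: conditions (Q2) and (Q3) of hyperbolic
embeddedness for a single subgroup. -/
def IsUndistorted (X : Set G) (H : Subgroup G) : Prop :=
  ∃ Y : Set G, Y.Finite ∧ Subgroup.closure Y = H ∧ ∃ μ c : ℝ, 0 ≤ μ ∧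
    ∀ h ∈ H, (wordLength Y h : ℝ) ≤ μ * wordLength X h + c

/-- Properness of the metric that `H` inherits from `(G, X)`: balls of `H` are finite. -/
def IsMetricallyProper (X : Set G) (H : Subgroup G) : Prop :=
  ∀ r : ℝ, {h | h ∈ H ∧ wordDist X 1 h ≤ r}.Finite

/-- Geometric separation: condition (Q1) of hyperbolic embeddedness for a single subgroup. -/
def IsGeomSeparated (X : Set G) (H : Subgroup G) : Prop :=
  ∀ ε : ℝ, 0 < ε → ∃ R : ℝ, ∀ g : G,
    (∃ a ∈ (H : Set G) ∩ nbhd X ε (g • (H : Set G)),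
      ∃ b ∈ (H : Set G) ∩ nbhd X ε (g • (H : Set G)), R ≤ wordDist X a b) → g ∈ H

lemma IsHypEmbFamily.isUndistorted {ι : Type*} {Q : ι → Subgroup G} (h : IsHypEmbFamily X Q)
    (i : ι) : IsUndistorted X (Q i) := by
  obtain ⟨-, Y, hY, μ, c, hμ, -, hle⟩ := h
  exact ⟨Y i, (hY i).1, (hY i).2.2, μ, c, zero_le_one.trans hμ, hle i⟩

lemma IsHypEmbFamily.isGeomSeparated {ι : Type*} {Q : ι → Subgroup G} (h : IsHypEmbFamily X Q)
    (i : ι) : IsGeomSeparated X (Q i) := fun ε hε => by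
  obtain ⟨R, hR⟩ := h.1 ε hε
  exact ⟨R, fun g hg => (hR g i i hg).2⟩

lemma IsUndistorted.isMetricallyProper (hH : IsUndistorted X H) : IsMetricallyProper X H := by
  obtain ⟨Y, hY, rfl, μ, c, hμ, hle⟩ := hH
  refine fun r => (finite_wordLength_le hY ⌊μ * r + c⌋₊).subset fun h ⟨hh, hr⟩ => ⟨hh, ?_⟩
  rw [wordDist_one_left] at hr
  exact Nat.le_floor ((hle h hh).trans (by gcongr))

lemma IsUndistorted.isLinearlyChained (hH : IsUndistorted X H) :
    ∃ M μ c : ℝ, 0 ≤ μ ∧ IsLinearlyChained (wordDist X) M μ c H := by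
  obtain ⟨Y, hY, rfl, μ, c, hμ, hle⟩ := hH
  obtain ⟨M, hM⟩ := (hY.image (wordLength X)).bddAbove
  refine ⟨M, μ, c, hμ, fun a ha b hb => ?_⟩
  have hab := mul_mem (inv_mem ha) hb
  obtain ⟨l, hlen, hl, hprod⟩ := exists_list_length_eq_wordLength hab
  have hlX : ∀ x ∈ l, wordLength X x ≤ M := fun x hx => (hl x hx).elim
    (fun hxY => hM ⟨x, hxY, rfl⟩) fun hxY => wordLength_inv X x ▸ hM ⟨x⁻¹, hxY, rfl⟩
  have hlH : ∀ x ∈ l, x ∈ Subgroup.closure Y := fun x hx => (hl x hx).elim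
    (fun hxY => Subgroup.subset_closure hxY) fun hxY => inv_mem_iff.1 (Subgroup.subset_closure hxY)
  refine ⟨fun i => a * (l.take i).prod,
    fun i => mul_mem ha (list_prod_mem fun x hx => hlH x (List.mem_of_mem_take hx)),
    wordDist_take_prod_succ_le hlX a, by simp, fun i hi => ?_⟩
  have hli : l.length ≤ i := by
    rw [hlen]
    exact_mod_cast (hle _ hab).trans hi
  simp [List.take_of_length_le hli, hprod]

theorem IsUndistorted.isQuasiconvex (hX : Subgroup.closure X = ⊤)
    (hhyp : IsHyperbolicDist (wordDist X)) (hH : IsUndistorted X H) : IsQuasiconvex X H := by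
  let := wordPseudoMetricSpace X hX
  obtain ⟨δ, -, hδ⟩ := hhyp
  obtain ⟨M, μ, c, hμ, hchain⟩ := hH.isLinearlyChained
  exact IsHyperbolicWith.exists_quasiconvex_of_isLinearlyChained hδ hμ hchain

lemma IsQuasiconvex.exists_isGromovQuasiconvex {δ : ℝ} (hX : Subgroup.closure X = ⊤)
    (hδ : IsHyperbolicWith (wordDist X) δ) (hH : IsQuasiconvex X H) :
    ∃ C, IsGromovQuasiconvex (wordDist X) C H := by
  let := wordPseudoMetricSpace X hX
  obtain ⟨C, -, hC⟩ := hH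
  refine ⟨2 * δ + 1 + C, fun a ha b hb w => ?_⟩
  obtain ⟨γ, rfl, hb', hγ⟩ := exists_isGeodesic hX a b
  obtain ⟨i, hi, hwi⟩ := IsHyperbolicWith.exists_dist_geodesic_le hδ hγ w
  obtain ⟨h, hh, hih⟩ := hC _ γ hγ ha (hb'.symm ▸ hb) i hi
  rw [hb'] at hwi
  refine ⟨h, hh, (dist_triangle w (γ i) h).trans ((add_le_add hwi hih).trans_eq ?_)⟩
  rw [← add_assoc, ← add_assoc]
  rfl

lemma IsGromovQuasiconvex.smul {C : ℝ} {A : Set G} (hA : IsGromovQuasiconvex (wordDist X) C A)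
    (g : G) : IsGromovQuasiconvex (wordDist X) C (g • A) := by
  rintro _ ⟨a, ha, rfl⟩ _ ⟨b, hb, rfl⟩ w
  obtain ⟨x, hx, hwx⟩ := hA a ha b hb (g⁻¹ * w)
  refine ⟨g * x, Set.smul_mem_smul_set hx, ?_⟩
  rw [← wordDist_mul_left X g, ← gromovProd_wordDist_mul_left X g, mul_inv_cancel_left] at hwx
  exact hwx

lemma mem_conjSub {g x : G} : x ∈ conjSub g H ↔ g⁻¹ * x * g ∈ H := by
  rw [conjSub, Subgroup.mem_map_equiv]
  simp

lemma conjSub_eq_of_inv_mul_mem {g g' : G} (h : g⁻¹ * g' ∈ H) : conjSub g H = conjSub g' H := by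
  ext x
  rw [mem_conjSub, mem_conjSub, ← H.mul_mem_cancel_right h, ← H.mul_mem_cancel_left (inv_mem h)]
  group

lemma exists_inf_conjSub_eq_conjSub {H₁ H₂ : Subgroup G} {g g' : G}
    (hg : g' ∈ DoubleCoset.doubleCoset g (H₁ : Set G) H₂) :
    ∃ h ∈ H₁, H₁ ⊓ conjSub g H₂ = conjSub h (H₁ ⊓ conjSub g' H₂) := by
  obtain ⟨x, hx, y, hy, rfl⟩ := DoubleCoset.mem_doubleCoset.1 hg
  refine ⟨x⁻¹, inv_mem hx, ?_⟩
  ext k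
  rw [conjSub_eq_of_inv_mul_mem (g := g) (g' := g * y) (by simpa using hy)]
  simp only [Subgroup.mem_inf, mem_conjSub, inv_inv]
  refine and_congr ?_ ?_
  · rw [H₁.mul_mem_cancel_right (inv_mem hx), H₁.mul_mem_cancel_left hx]
  · group

lemma IsGeomSeparated.exists_forall_inv_mul_mem (hX : Subgroup.closure X = ⊤)
    (hH : IsGeomSeparated X H) {ε : ℝ} (hε : 0 < ε) :
    ∃ R : ℝ, ∀ g g' a b : G, a ∈ nbhd X ε (g • (H : Set G)) ∩ nbhd X ε (g' • (H : Set G)) →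
      b ∈ nbhd X ε (g • (H : Set G)) ∩ nbhd X ε (g' • (H : Set G)) → R ≤ wordDist X a b →
      g⁻¹ * g' ∈ H := by
  let := wordPseudoMetricSpace X hX
  obtain ⟨R, hR⟩ := hH (2 * ε) (by positivity)
  refine ⟨R + 2 * ε, fun g g' a b ha hb hab => hR _ ?_⟩
  have near {a : G} (ha : a ∈ nbhd X ε (g • (H : Set G)) ∩ nbhd X ε (g' • (H : Set G))) :
      ∃ h ∈ (H : Set G) ∩ nbhd X (2 * ε) ((g⁻¹ * g') • (H : Set G)), dist a (g * h) ≤ ε := by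
    obtain ⟨⟨_, ⟨h, hh, rfl⟩, hah⟩, _, ⟨h', hh', rfl⟩, hah'⟩ := ha
    refine ⟨h, ⟨hh, g⁻¹ * g' * h', Set.smul_mem_smul_set hh', ?_⟩, hah⟩
    rw [← wordDist_mul_left X g, mul_assoc, mul_inv_cancel_left]
    exact (dist_triangle_left (g * h) (g' * h') a).trans
      ((add_le_add hah hah').trans_eq (two_mul ε).symm)
  obtain ⟨h, hh, hah⟩ := near ha
  obtain ⟨k, hk, hbk⟩ := near hb
  have htriangle := dist_triangle4_right a b (g * h) (g * k)
  have htranslate : dist (g * h) (g * k) = wordDist X h k := wordDist_mul_left X g h k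
  have hab' : R + 2 * ε ≤ dist a b := hab
  exact ⟨h, hh, k, hk, by linarith⟩

lemma exists_shortest_mem_doubleCoset (X : Set G) (H₁ H₂ : Subgroup G) (g : G) :
    ∃ g' ∈ DoubleCoset.doubleCoset g (H₁ : Set G) H₂,
      ∀ x ∈ (H₁ : Set G), ∀ y ∈ g' • (H₂ : Set G), wordDist X 1 g' ≤ wordDist X x y := by
  obtain ⟨g', hg', hmin⟩ := exists_minimalFor_of_wellFoundedLT
    (· ∈ DoubleCoset.doubleCoset g (H₁ : Set G) H₂) (wordLength X)
    ⟨g, DoubleCoset.mem_doubleCoset_self H₁ H₂ g⟩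
  refine ⟨g', hg', ?_⟩
  rintro x hx _ ⟨y, hy, rfl⟩
  have hmem : x⁻¹ * (g' * y) ∈ DoubleCoset.doubleCoset g (H₁ : Set G) H₂ := by
    rw [← DoubleCoset.doubleCoset_eq_of_mem hg']
    exact DoubleCoset.mem_doubleCoset.2 ⟨x⁻¹, inv_mem hx, y, hy, by group⟩
  rw [wordDist_one_left, wordDist]
  exact_mod_cast (le_total _ _).elim id (hmin hmem)

lemma exists_mem_doubleCoset_near_of_long {δ C₁ C₂ : ℝ} {H₁ H₂ : Subgroup G} {L s : ℕ} {g k : G}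
    (hX : Subgroup.closure X = ⊤) (hδ : IsHyperbolicWith (wordDist X) δ)
    (hH₁ : IsGromovQuasiconvex (wordDist X) C₁ H₁) (hH₂ : IsGromovQuasiconvex (wordDist X) C₂ H₂)
    (hg : ∀ x ∈ (H₁ : Set G), ∀ y ∈ g • (H₂ : Set G), wordDist X 1 g ≤ wordDist X x y)
    (hk : k ∈ H₁ ⊓ conjSub g H₂) (hL : C₁ + 4 * δ < L) (hlong : 2 * L + s ≤ wordLength X k) :
    ∃ g' ∈ DoubleCoset.doubleCoset g (H₁ : Set G) H₂, ∃ b ∈ H₁,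
      |wordDist X 1 b - s| ≤ 2 * C₁ ∧ 1 ∈ nbhd X (C₁ + C₂ + 4 * δ) (g' • (H₂ : Set G)) ∧
        b ∈ nbhd X (C₁ + C₂ + 4 * δ) (g' • (H₂ : Set G)) := by
  let := wordPseudoMetricSpace X hX
  obtain ⟨hk₁, hk₂⟩ := Subgroup.mem_inf.1 hk
  obtain ⟨γ, h0, hn, hγ⟩ := exists_isGeodesic hX 1 k
  rw [inv_one, one_mul] at hn hγ
  have hgB : g ∈ g • (H₂ : Set G) := ⟨1, one_mem H₂, mul_one g⟩
  have hkgB : k * g ∈ g • (H₂ : Set G) := ⟨_, mem_conjSub.1 hk₂, by simp [mul_assoc]⟩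
  have hkg : ∀ x ∈ (H₁ : Set G), ∀ y ∈ g • (H₂ : Set G), wordDist X k (k * g) ≤ wordDist X x y := by
    simpa only [← wordDist_mul_left X k 1 g, mul_one] using hg
  obtain ⟨x, hx, x', hx', hs, hxB, hxB'⟩ := IsHyperbolicWith.exists_near_pair hδ hH₁ (hH₂.smul g) hγ
    (h0 ▸ one_mem H₁) (hn.symm ▸ hk₁) hgB hkgB (h0.symm ▸ hg) (hn.symm ▸ hkg) hL hlong
  refine ⟨x⁻¹ * g, DoubleCoset.mem_doubleCoset.2 ⟨x⁻¹, inv_mem hx, 1, one_mem H₂, by simp⟩,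
    x⁻¹ * x', mul_mem (inv_mem hx) hx', ?_, ?_, ?_⟩
  · rwa [← wordDist_mul_left X x, mul_one, mul_inv_cancel_left]
  · simpa [smul_smul] using mul_mem_nbhd_smul (g := x⁻¹) hxB
  · simpa [smul_smul] using mul_mem_nbhd_smul (g := x⁻¹) hxB'

lemma exists_short_or_near (hX : Subgroup.closure X = ⊤) (hhyp : IsHyperbolicDist (wordDist X))
    {H₁ H₂ : Subgroup G} (hH₁ : IsQuasiconvex X H₁) (hH₂ : IsQuasiconvex X H₂) :
    ∃ ε : ℝ, 0 < ε ∧ ∀ R : ℝ, ∃ r : ℝ, ∀ g : G, ∃ g' ∈ DoubleCoset.doubleCoset g (H₁ : Set G) H₂,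
      (∀ k ∈ H₁ ⊓ conjSub g' H₂, wordDist X 1 k ≤ r) ∨
        ∃ b ∈ H₁, R ≤ wordDist X 1 b ∧ wordDist X 1 b ≤ r ∧
          1 ∈ nbhd X ε (g' • (H₂ : Set G)) ∧ b ∈ nbhd X ε (g' • (H₂ : Set G)) := by
  obtain ⟨δ, -, hδ⟩ := hhyp
  obtain ⟨C₁, hC₁⟩ := hH₁.exists_isGromovQuasiconvex hX hδ
  obtain ⟨C₂, hC₂⟩ := hH₂.exists_isGromovQuasiconvex hX hδ
  obtain ⟨L, hL⟩ := exists_nat_gt (C₁ + 4 * δ)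
  have hε : C₁ + C₂ + 4 * δ ≤ max 1 (C₁ + C₂ + 4 * δ) := le_max_right _ _
  refine ⟨_, zero_lt_one.trans_le (le_max_left 1 (C₁ + C₂ + 4 * δ)), fun R => ?_⟩
  obtain ⟨s, hs⟩ := exists_nat_ge (R + 2 * C₁)
  refine ⟨max (2 * L + s : ℕ) (s + 2 * C₁), fun g => ?_⟩
  obtain ⟨g', hg', hshort⟩ := exists_shortest_mem_doubleCoset X H₁ H₂ g
  by_cases hlong : ∃ k ∈ H₁ ⊓ conjSub g' H₂, 2 * L + s ≤ wordLength X k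
  · obtain ⟨k, hk, hLk⟩ := hlong
    obtain ⟨g'', hg'', b, hb, hbs, hone, hbnear⟩ :=
      exists_mem_doubleCoset_near_of_long hX hδ hC₁ hC₂ hshort hk hL hLk
    obtain ⟨hge, hle⟩ := abs_le.1 hbs
    exact ⟨g'', DoubleCoset.doubleCoset_eq_of_mem hg' ▸ hg'', .inr ⟨b, hb, by linarith,
      le_max_of_le_right (by linarith), nbhd_mono hε hone, nbhd_mono hε hbnear⟩⟩
  · push Not at hlong
    refine ⟨g', hg', .inl fun k hk => le_max_of_le_left ?_⟩
    rw [wordDist_one_left]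
    exact_mod_cast (hlong k hk).le

theorem finitely_many_H1_conj_classes_general (hX : Subgroup.closure X = ⊤)
    (hhyp : IsHyperbolicDist (wordDist X)) (H₁ H₂ : Subgroup G) (hH₁ : IsQuasiconvex X H₁)
    (hproper : IsMetricallyProper X H₁) (hH₂ : IsQuasiconvex X H₂)
    (hsep : IsGeomSeparated X H₂) :
    ∃ F : Finset (Subgroup G), ∀ g : G, ∃ K ∈ F, ∃ h ∈ H₁,
      H₁ ⊓ conjSub g H₂ = conjSub h K := by
  obtain ⟨ε, hε, hdichotomy⟩ := exists_short_or_near hX hhyp hH₁ hH₂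
  obtain ⟨R, hR⟩ := hsep.exists_forall_inv_mul_mem hX hε
  obtain ⟨r, hr⟩ := hdichotomy R
  let short : Set (Subgroup G) := {K | (K : Set G) ⊆ {h | h ∈ H₁ ∧ wordDist X 1 h ≤ r}}
  let near (b : G) : Set (Subgroup G) := {K | R ≤ wordDist X 1 b ∧ ∃ g : G,
    1 ∈ nbhd X ε (g • (H₂ : Set G)) ∧ b ∈ nbhd X ε (g • (H₂ : Set G)) ∧ H₁ ⊓ conjSub g H₂ = K}
  have hshort : short.Finite := (hproper r).finite_subsets.preimage SetLike.coe_injective.injOn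
  have hnear (b : G) : (near b).Finite := by
    refine Set.Subsingleton.finite ?_
    rintro _ ⟨hb, g, hone, hbg, rfl⟩ _ ⟨-, g', hone', hbg', rfl⟩
    rw [conjSub_eq_of_inv_mul_mem (hR g g' 1 b ⟨hone, hone'⟩ ⟨hbg, hbg'⟩ hb)]
  have hfinite := hshort.union ((hproper r).biUnion fun b _ => hnear b)
  refine ⟨hfinite.toFinset, fun g => ?_⟩
  obtain ⟨g', hg', hcases⟩ := hr g
  refine ⟨H₁ ⊓ conjSub g' H₂, hfinite.mem_toFinset.2 ?_, exists_inf_conjSub_eq_conjSub hg'⟩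
  rcases hcases with hsmall | ⟨b, hb, hRb, hbr, hone, hbg⟩
  · exact .inl fun k hk => ⟨(Subgroup.mem_inf.1 hk).1, hsmall k hk⟩
  · exact .inr (Set.mem_biUnion ⟨hb, hbr⟩ ⟨hRb, g', hone, hbg, rfl⟩)

end Subgroups

/-- **Finitely many `H₁`-conjugacy classes of intersections `H₁ ∩ H₂^g`.** -/
theorem finitely_many_H1_conj_classes {G : Type*} [Group G] (X : Set G)
    (hXgen : Subgroup.closure X = ⊤) (hhyp : IsHyperbolicDist (wordDist X))
    (H₁ H₂ : Subgroup G)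
    (he₁ : IsHypEmbFamily X (fun _ : Fin 1 => H₁))
    (he₂ : IsHypEmbFamily X (fun _ : Fin 1 => H₂)) :
    ∃ F : Finset (Subgroup G), ∀ g : G, ∃ K ∈ F, ∃ h ∈ H₁,
      H₁ ⊓ conjSub g H₂ = conjSub h K :=
  finitely_many_H1_conj_classes_general hXgen hhyp H₁ H₂
    ((he₁.isUndistorted 0).isQuasiconvex hXgen hhyp) (he₁.isUndistorted 0).isMetricallyProper
    ((he₂.isUndistorted 0).isQuasiconvex hXgen hhyp) (he₂.isGeomSeparated 0)
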